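/- Let Z be a standard Gaussian random variable with density ψ(x) = (1/√(2π)) e^{-x²/2}, and let X be a real random variable with density p satisfying p(x) ≤ M for almost every x and E[X²] < +∞. Set Δ = sup_x |p(x) − ψ(x)|. Then, for every T > 0, the relative entropy satisfies D(X‖Z) ≤ 2TΔ + 2√(2π) e^{T²/2} Δ + ∫_{|x| > T} (x²/2 + log(M√(2π))) p(x) dx. -/

import Mathlib

open MeasureTheory
open scoped Real

/-- The extended-real-valued integral `∫ f dμ`, defined as the difference of the
lintegrals of the positive and negative parts of `f`. -/
noncomputable def eInt {α : Type*} [MeasurableSpace α] (μ : Measure α) (f : α → ℝ) : EReal :=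
  ((∫⁻ x, ENNReal.ofReal (f x) ∂μ) : EReal) - ((∫⁻ x, ENNReal.ofReal (-(f x)) ∂μ) : EReal)

/-- Relative entropy `D(p‖ψ) = ∫ p log(p/ψ)` of probability densities on `ℝ`. -/
noncomputable def relEntD (p ψ : ℝ → ℝ) : EReal :=
  eInt volume (fun x => p x * Real.log (p x / ψ x))

/-- The standard Gaussian density `ψ(x) = (2π)^{-1/2} e^{-x²/2}`. -/
noncomputable def stdGaussPDF (x : ℝ) : ℝ :=
  (1 / Real.sqrt (2 * π)) * Real.exp (-x ^ 2 / 2)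

/-!
Write `ψ` for the Gaussian density. Pointwise `p - ψ ≤ p log (p / ψ)`, so the entropy integrand is
integrable once it has an integrable upper bound, and two upper bounds are available. Where `p` is
close to `ψ`, the inequality `t log t ≤ (t - 1) + (t - 1)²` at `t = p / ψ` gives
`p log (p / ψ) ≤ (p - ψ) + (p - ψ)² / ψ`; since `|p - ψ| ≤ Δ`, `|p - ψ| ≤ p + ψ` and
`1 / ψ ≤ √(2π) exp (T² / 2)` on `[-T, T]`, and `p + ψ` has total mass `2`, this produces the first
two terms. On `|x| > T` one only uses `p ≤ M`, that is `log (p / ψ) ≤ log (M / ψ)`, and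
`log (M / ψ) = x² / 2 + log (M √(2π))`.
-/

section Pointwise

open InformationTheory

variable {a b t K M Δ : ℝ}

lemma klFun_le_sub_one_sq (ht : 0 ≤ t) : klFun t ≤ (t - 1) ^ 2 := by
  rcases ht.eq_or_lt with rfl | ht
  · simp [klFun]
  · have h := mul_le_mul_of_nonneg_left (Real.log_le_sub_one_of_pos ht) ht.le
    rw [klFun_apply]
    linarith

lemma mul_klFun_div (hb : b ≠ 0) : b * klFun (a / b) = a * Real.log (a / b) - (a - b) := by
  rw [klFun_apply]
  field

lemma sub_le_mul_log_div (ha : 0 ≤ a) (hb : 0 < b) : a - b ≤ a * Real.log (a / b) := by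
  have h : 0 ≤ b * klFun (a / b) := mul_nonneg hb.le (klFun_nonneg (div_nonneg ha hb.le))
  rwa [mul_klFun_div hb.ne', sub_nonneg] at h

lemma mul_log_div_le_sub_add_sq_div (ha : 0 ≤ a) (hb : 0 < b) :
    a * Real.log (a / b) ≤ (a - b) + (a - b) ^ 2 / b := by
  have h : b * klFun (a / b) ≤ b * (a / b - 1) ^ 2 :=
    mul_le_mul_of_nonneg_left (klFun_le_sub_one_sq (div_nonneg ha hb.le)) hb.le
  rw [mul_klFun_div hb.ne', sub_le_iff_le_add'] at h
  refine h.trans_eq ?_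
  field

lemma mul_log_div_le_of_abs_sub_le (ha : 0 ≤ a) (hb : 0 < b) (hΔ : |a - b| ≤ Δ) (hK : b⁻¹ ≤ K) :
    a * Real.log (a / b) ≤ Δ + K * Δ * (a + b) := by
  have hΔ_nonneg : 0 ≤ Δ := (abs_nonneg _).trans hΔ
  have h_abs : |a - b| ≤ a + b := abs_le.2 ⟨by linarith, by linarith⟩
  have h_sq : (a - b) ^ 2 ≤ Δ * (a + b) := by
    rw [← sq_abs, sq]
    exact mul_le_mul hΔ h_abs (abs_nonneg _) hΔ_nonneg
  calc a * Real.log (a / b)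
      ≤ (a - b) + (a - b) ^ 2 * b⁻¹ := mul_log_div_le_sub_add_sq_div ha hb
    _ ≤ Δ + Δ * (a + b) * K :=
        add_le_add ((le_abs_self _).trans hΔ)
          (mul_le_mul h_sq hK (inv_nonneg.2 hb.le) (by positivity))
    _ = Δ + K * Δ * (a + b) := by ring

lemma mul_log_div_le_log_div_mul (ha : 0 ≤ a) (haM : a ≤ M) (hb : 0 < b) :
    a * Real.log (a / b) ≤ Real.log (M / b) * a := by
  rcases ha.eq_or_lt with rfl | ha
  · simp
  · rw [mul_comm]
    gcongr

end Pointwise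

section Integral

variable {α : Type*} [MeasurableSpace α] {μ : Measure α} {f g p q : α → ℝ} {K M Δ : ℝ}

lemma eInt_eq_integral (hf : Integrable f μ) : eInt μ f = ((∫ x, f x ∂μ : ℝ) : EReal) := by
  have h_pos : ∫⁻ x, ENNReal.ofReal (f x) ∂μ ≠ ⊤ := hf.lintegral_lt_top.ne
  have h_neg : ∫⁻ x, ENNReal.ofReal (-f x) ∂μ ≠ ⊤ := hf.neg.lintegral_lt_top.ne
  rw [eInt, integral_eq_lintegral_pos_part_sub_lintegral_neg_part hf, EReal.coe_sub,
    EReal.coe_ennreal_toReal h_pos, EReal.coe_ennreal_toReal h_neg]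

lemma pos_of_ae_le_of_integral_pos (hf : 0 < ∫ x, f x ∂μ) (hM : ∀ᵐ x ∂μ, f x ≤ M) : 0 < M := by
  contrapose! hf
  exact integral_nonpos_of_ae (hM.mono fun _ hx ↦ hx.trans hf)

lemma setIntegral_add_le_integral_add_integral (s : Set α)
    (hf : Integrable f μ) (hg : Integrable g μ)
    (hf_nonneg : 0 ≤ᵐ[μ] f) (hg_nonneg : 0 ≤ᵐ[μ] g) :
    ∫ x in s, (f x + g x) ∂μ ≤ ∫ x, f x ∂μ + ∫ x, g x ∂μ := by
  rw [integral_add hf.restrict hg.restrict]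
  exact add_le_add (setIntegral_le_integral hf hf_nonneg) (setIntegral_le_integral hg hg_nonneg)

lemma integrable_mul_log_div_of_le (hp : Integrable p μ) (hq : Integrable q μ)
    (hp_nonneg : ∀ᵐ x ∂μ, 0 ≤ p x) (hq_pos : ∀ᵐ x ∂μ, 0 < q x) (hg : Integrable g μ)
    (h_le : ∀ᵐ x ∂μ, p x * Real.log (p x / q x) ≤ g x) :
    Integrable (fun x ↦ p x * Real.log (p x / q x)) μ := by
  have h_meas : AEStronglyMeasurable (fun x ↦ p x * Real.log (p x / q x)) μ :=
    (hp.aemeasurable.mul (hp.aemeasurable.div hq.aemeasurable).log).aestronglyMeasurable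
  refine integrable_of_le_of_le h_meas ?_ h_le (hp.sub hq) hg
  filter_upwards [hp_nonneg, hq_pos] with x hpx hqx using sub_le_mul_log_div hpx hqx

lemma integrable_and_integral_mul_log_div_le_of_abs_sub_le [IsFiniteMeasure μ]
    (hp : Integrable p μ) (hq : Integrable q μ)
    (hp_nonneg : ∀ᵐ x ∂μ, 0 ≤ p x) (hq_pos : ∀ᵐ x ∂μ, 0 < q x)
    (hΔ : ∀ᵐ x ∂μ, |p x - q x| ≤ Δ) (hK : ∀ᵐ x ∂μ, (q x)⁻¹ ≤ K) :
    Integrable (fun x ↦ p x * Real.log (p x / q x)) μ ∧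
      ∫ x, p x * Real.log (p x / q x) ∂μ ≤
        Δ * μ.real Set.univ + K * Δ * ∫ x, (p x + q x) ∂μ := by
  have hΔ_int : Integrable (fun _ ↦ Δ) μ := integrable_const Δ
  have hpq_int : Integrable (fun x ↦ K * Δ * (p x + q x)) μ := (hp.add hq).const_mul (K * Δ)
  have h_le : ∀ᵐ x ∂μ, p x * Real.log (p x / q x) ≤ Δ + K * Δ * (p x + q x) := by
    filter_upwards [hp_nonneg, hq_pos, hΔ, hK] with x hpx hqx hΔx hKx
      using mul_log_div_le_of_abs_sub_le hpx hqx hΔx hKx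
  have h_int := integrable_mul_log_div_of_le hp hq hp_nonneg hq_pos (hΔ_int.add hpq_int) h_le
  refine ⟨h_int, (integral_mono_ae h_int (hΔ_int.add hpq_int) h_le).trans_eq ?_⟩
  simp only [Pi.add_apply]
  rw [integral_add hΔ_int hpq_int, integral_const, integral_const_mul, smul_eq_mul, mul_comm Δ]

lemma integrable_and_integral_mul_log_div_le_of_le
    (hp : Integrable p μ) (hq : Integrable q μ)
    (hp_nonneg : ∀ᵐ x ∂μ, 0 ≤ p x) (hq_pos : ∀ᵐ x ∂μ, 0 < q x) (hM : ∀ᵐ x ∂μ, p x ≤ M)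
    (hlog : Integrable (fun x ↦ Real.log (M / q x) * p x) μ) :
    Integrable (fun x ↦ p x * Real.log (p x / q x)) μ ∧
      ∫ x, p x * Real.log (p x / q x) ∂μ ≤ ∫ x, Real.log (M / q x) * p x ∂μ := by
  have h_le : ∀ᵐ x ∂μ, p x * Real.log (p x / q x) ≤ Real.log (M / q x) * p x := by
    filter_upwards [hp_nonneg, hq_pos, hM] with x hpx hqx hMx
      using mul_log_div_le_log_div_mul hpx hMx hqx
  have h_int := integrable_mul_log_div_of_le hp hq hp_nonneg hq_pos hlog h_le
  exact ⟨h_int, integral_mono_ae h_int hlog h_le⟩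

theorem eInt_mul_log_div_le {s : Set α} (hs : MeasurableSet s) (hμs : μ s ≠ ⊤)
    (hp : Integrable p μ) (hq : Integrable q μ)
    (hp_nonneg : ∀ᵐ x ∂μ, 0 ≤ p x) (hq_pos : ∀ᵐ x ∂μ, 0 < q x)
    (hΔ : ∀ᵐ x ∂μ.restrict s, |p x - q x| ≤ Δ) (hK : ∀ᵐ x ∂μ.restrict s, (q x)⁻¹ ≤ K)
    (hM : ∀ᵐ x ∂μ.restrict sᶜ, p x ≤ M)
    (hlog : IntegrableOn (fun x ↦ Real.log (M / q x) * p x) sᶜ μ) :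
    eInt μ (fun x ↦ p x * Real.log (p x / q x)) ≤
      ((Δ * μ.real s + K * Δ * ∫ x in s, (p x + q x) ∂μ
        + ∫ x in sᶜ, Real.log (M / q x) * p x ∂μ : ℝ) : EReal) := by
  have : IsFiniteMeasure (μ.restrict s) := isFiniteMeasure_restrict.2 hμs
  obtain ⟨h_int, h_le⟩ := integrable_and_integral_mul_log_div_le_of_abs_sub_le hp.restrict
    hq.restrict (ae_restrict_of_ae hp_nonneg) (ae_restrict_of_ae hq_pos) hΔ hK
  obtain ⟨h_int_compl, h_le_compl⟩ := integrable_and_integral_mul_log_div_le_of_le hp.restrict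
    hq.restrict (ae_restrict_of_ae hp_nonneg) (ae_restrict_of_ae hq_pos) hM hlog
  have h_int_univ : Integrable (fun x ↦ p x * Real.log (p x / q x)) μ := by
    rw [← integrableOn_univ, ← Set.union_compl_self s]
    exact IntegrableOn.union h_int h_int_compl
  rw [measureReal_restrict_apply_univ] at h_le
  rw [eInt_eq_integral h_int_univ, EReal.coe_le_coe_iff, ← integral_add_compl hs h_int_univ]
  exact add_le_add h_le h_le_compl

end Integral

section Gaussian

variable {x M T : ℝ}

lemma stdGaussPDF_eq_gaussianPDFReal : stdGaussPDF = ProbabilityTheory.gaussianPDFReal 0 1 := by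
  ext x
  simp [stdGaussPDF, ProbabilityTheory.gaussianPDFReal]

lemma stdGaussPDF_pos (x : ℝ) : 0 < stdGaussPDF x := by
  unfold stdGaussPDF
  positivity

lemma integrable_stdGaussPDF : Integrable stdGaussPDF := by
  rw [stdGaussPDF_eq_gaussianPDFReal]
  exact ProbabilityTheory.integrable_gaussianPDFReal 0 1

lemma integral_stdGaussPDF : ∫ x, stdGaussPDF x = 1 := by
  rw [stdGaussPDF_eq_gaussianPDFReal]
  exact ProbabilityTheory.integral_gaussianPDFReal_eq_one 0 one_ne_zero

lemma inv_stdGaussPDF (x : ℝ) : (stdGaussPDF x)⁻¹ = √(2 * π) * Real.exp (x ^ 2 / 2) := by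
  rw [stdGaussPDF, neg_div, Real.exp_neg, one_div, mul_inv, inv_inv, inv_inv]

lemma inv_stdGaussPDF_le (hx : |x| ≤ T) :
    (stdGaussPDF x)⁻¹ ≤ √(2 * π) * Real.exp (T ^ 2 / 2) := by
  have h_sq : x ^ 2 ≤ T ^ 2 := sq_le_sq.2 (hx.trans (le_abs_self T))
  rw [inv_stdGaussPDF]
  gcongr

lemma log_div_stdGaussPDF (hM : M ≠ 0) (x : ℝ) :
    Real.log (M / stdGaussPDF x) = x ^ 2 / 2 + Real.log (M * √(2 * π)) := by
  rw [div_eq_mul_inv, inv_stdGaussPDF, ← mul_assoc, Real.log_mul (by positivity) (by positivity),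
    Real.log_exp, add_comm]

lemma integrable_log_div_stdGaussPDF_mul {μ : Measure ℝ} {p : ℝ → ℝ} (hM : M ≠ 0)
    (hp : Integrable p μ) (hp_sq : Integrable (fun x ↦ x ^ 2 * p x) μ) :
    Integrable (fun x ↦ Real.log (M / stdGaussPDF x) * p x) μ := by
  simp only [log_div_stdGaussPDF hM, add_mul, div_mul_eq_mul_div]
  exact (hp_sq.div_const 2).add (hp.const_mul _)

end Gaussian

/-- **Inequality (6.5).** Let `Z` be standard Gaussian with density `ψ`, and let `X`
have a density `p ≤ M` a.e. with `E X² < ∞`. With `Δ = sup_x |p(x) − ψ(x)|`, for every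
`T > 0`:
`D(X‖Z) ≤ 2TΔ + 2√(2π) e^{T²/2} Δ + ∫_{|x|>T} (x²/2 + log(M√(2π))) p(x) dx`. -/
theorem stmt_17
    (p : ℝ → ℝ) (hpm : Measurable p) (hpnn : ∀ x, 0 ≤ p x)
    (hp1 : ∫⁻ x, ENNReal.ofReal (p x) = 1)
    (M : ℝ) (hM : ∀ᵐ x ∂(volume : Measure ℝ), p x ≤ M)
    (hsec : Integrable (fun x => x ^ 2 * p x) volume)
    (Δ : ℝ) (hΔ : ∀ᵐ x ∂(volume : Measure ℝ), |p x - stdGaussPDF x| ≤ Δ)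
    (T : ℝ) (hT : 0 < T) :
    relEntD p stdGaussPDF ≤
      ((2 * T * Δ + 2 * Real.sqrt (2 * π) * Real.exp (T ^ 2 / 2) * Δ
        + ∫ x in {x : ℝ | T < |x|},
            (x ^ 2 / 2 + Real.log (M * Real.sqrt (2 * π))) * p x : ℝ) : EReal) := by
  have hp_mass : ∫ x, p x = 1 := by
    rw [integral_eq_lintegral_of_nonneg_ae (ae_of_all _ hpnn) hpm.aestronglyMeasurable, hp1,
      ENNReal.toReal_one]
  have hp : Integrable p := .of_integral_ne_zero (hp_mass ▸ one_ne_zero)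
  have hM_pos : 0 < M := pos_of_ae_le_of_integral_pos (hp_mass ▸ one_pos) hM
  have hΔ_nonneg : 0 ≤ Δ := hΔ.exists.elim fun _ hx ↦ (abs_nonneg _).trans hx
  have h_mass : ∫ x in Set.Icc (-T) T, (p x + stdGaussPDF x) ≤ 1 + 1 := by
    simpa only [hp_mass, integral_stdGaussPDF] using setIntegral_add_le_integral_add_integral _ hp
      integrable_stdGaussPDF (ae_of_all _ hpnn) (ae_of_all _ fun x ↦ (stdGaussPDF_pos x).le)
  have h_compl : (Set.Icc (-T) T)ᶜ = {x | T < |x|} := by ext x; simp [← abs_le]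
  refine (eInt_mul_log_div_le (s := Set.Icc (-T) T) measurableSet_Icc measure_Icc_lt_top.ne hp
    integrable_stdGaussPDF (ae_of_all _ hpnn) (ae_of_all _ stdGaussPDF_pos) (ae_restrict_of_ae hΔ)
    (ae_restrict_of_forall_mem measurableSet_Icc fun x hx ↦ inv_stdGaussPDF_le (abs_le.2 hx))
    (ae_restrict_of_ae hM) (integrable_log_div_stdGaussPDF_mul hM_pos.ne' hp hsec).integrableOn
    ).trans (EReal.coe_le_coe_iff.2 ?_)
  simp only [h_compl, log_div_stdGaussPDF hM_pos.ne']
  gcongr ?_ + _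
  calc Δ * volume.real (Set.Icc (-T) T)
        + √(2 * π) * Real.exp (T ^ 2 / 2) * Δ * ∫ x in Set.Icc (-T) T, (p x + stdGaussPDF x)
      ≤ Δ * (T - -T) + √(2 * π) * Real.exp (T ^ 2 / 2) * Δ * (1 + 1) := by
        rw [Real.volume_real_Icc_of_le (by linarith)]
        gcongr
    _ = 2 * T * Δ + 2 * √(2 * π) * Real.exp (T ^ 2 / 2) * Δ := by ring
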